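/- Let G = (V,E) be a finite simple graph that is not a disjoint union of copies of K_2, and let v_1, v_2 ∈ V. Then H_{G_2(v_1,v_2)}^ψ ⊆ H_{G_3(v_1,v_2)}^ψ ⊆ H_{G_4(v_1,v_2)}^ψ ⊆ ⋯ ⊆ H_G^ψ. Moreover, if v_1 and v_2 are not adjacent in G, then H_{G_1(v_1,v_2)}^ψ ⊆ H_{G_2(v_1,v_2)}^ψ. -/

import Mathlib

open Set Matrix

noncomputable section

/-- Entrywise power function `x ↦ x^α` on nonnegative reals, with the convention `0^α := 0`. -/
def powEnt (α x : ℝ) : ℝ := if x = 0 then 0 else x ^ α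

/-- The odd extension `ψ_α(x) = sgn(x)|x|^α` of the power function, with `ψ_α(0) = 0`. -/
def psiF (α x : ℝ) : ℝ := Real.sign x * |x| ^ α

/-- The even extension `φ_α(x) = |x|^α` of the power function, with `φ_α(0) = 0`. -/
def phiF (α x : ℝ) : ℝ := if x = 0 then 0 else |x| ^ α

/-- `P_G(I)`: positive semidefinite matrices with entries in `I` and zeros outside
the edge pattern of `G`. -/
def PsetG {V : Type*} [Fintype V] (G : SimpleGraph V) (I : Set ℝ) :
    Set (Matrix V V ℝ) :=
  {A | A.PosSemidef ∧ (∀ i j, A i j ∈ I) ∧ ∀ i j, i ≠ j → ¬ G.Adj i j → A i j = 0}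

/-- `H_G`: the set of entrywise powers preserving `P_G([0,∞))`. -/
def HsetG {V : Type*} [Fintype V] (G : SimpleGraph V) : Set ℝ :=
  {α | ∀ A ∈ PsetG G (Ici (0 : ℝ)), A.map (powEnt α) ∈ PsetG G univ}

/-- `H_G^ψ`: the set of powers `α` such that `ψ_α` preserves `P_G(ℝ)`. -/
def HsetPsi {V : Type*} [Fintype V] (G : SimpleGraph V) : Set ℝ :=
  {α | ∀ A ∈ PsetG G univ, A.map (psiF α) ∈ PsetG G univ}

/-- `H_G^φ`: the set of powers `α` such that `φ_α` preserves `P_G(ℝ)`. -/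
def HsetPhi {V : Type*} [Fintype V] (G : SimpleGraph V) : Set ℝ :=
  {α | ∀ A ∈ PsetG G univ, A.map (phiF α) ∈ PsetG G univ}

/-- The set of which the critical exponent is the least element:
all `α` such that every `β ≥ α` lies in `H`. -/
def CEset (H : Set ℝ) : Set ℝ := {α | ∀ β, α ≤ β → β ∈ H}

/-- The positive integers, as a set of reals. -/
def posNats : Set ℝ := {x | ∃ k : ℕ, 0 < k ∧ x = k}

/-- The odd positive integers `−1+2ℕ`, as a set of reals. -/
def oddNats : Set ℝ := {x | ∃ k : ℕ, 0 < k ∧ x = 2 * k - 1}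

/-- The even positive integers `2ℕ`, as a set of reals. -/
def evenNats : Set ℝ := {x | ∃ k : ℕ, 0 < k ∧ x = 2 * k}

/-- `addPath G v₁ v₂ t`: the graph `G` together with an added path from `v₁` to `v₂` having
`t` new internal vertices (hence `t + 1` edges); for `t = 0` this adds the edge `v₁v₂`.
Thus `G_m(v₁,v₂)` of the paper is `addPath G v₁ v₂ (m−1)`. -/
def addPath {V : Type*} (G : SimpleGraph V) (v₁ v₂ : V) (t : ℕ) :
    SimpleGraph (V ⊕ Fin t) :=
  SimpleGraph.fromRel (fun x y =>
    match x, y with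
    | Sum.inl a, Sum.inl b => G.Adj a b ∨ (t = 0 ∧ a = v₁ ∧ b = v₂)
    | Sum.inl a, Sum.inr i => (a = v₁ ∧ (i : ℕ) = 0) ∨ (a = v₂ ∧ (i : ℕ) = t - 1)
    | Sum.inr i, Sum.inr j => (j : ℕ) = (i : ℕ) + 1
    | Sum.inr _, Sum.inl _ => False)

/-!
Let `v` be a vertex whose neighbours are pairwise non-adjacent, and let `A` be positive semidefinite
with the pattern of the graph. The Schur complement `S` of `A` at `v` has the pattern of the graph
in which `v` is deleted and its neighbours are joined. In each off-diagonal entry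
`a_{ij} - a_{iv} a_{vj} / a_{vv}` one of the two terms vanishes, so applying `ψ_α` commutes there
with taking the Schur complement; on the diagonal superadditivity of `x ↦ x ^ α` for `1 ≤ α` makes
the Schur complement of `ψ_α[A]` the larger one. Hence if `ψ_α[S]` is positive semidefinite, so are
the Schur complement of `ψ_α[A]` at `v` and `ψ_α[A]` itself. Removing the last internal vertex of
the added path in this way turns `G_{m+1}` into `G_m`. The condition `1 ≤ α` is forced by any path
on three vertices.
-/

section PosSemidef

variable {U W 𝕜 : Type*} [RCLike 𝕜]

open scoped ComplexOrder

lemma posSemidef_of_submatrix_of_support_subset [Finite U] [Finite W] {f : U → W}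
    (hf : Function.Injective f) {M : Matrix W W 𝕜}
    (hM : ∀ x y, M x y ≠ 0 → x ∈ range f ∧ y ∈ range f)
    (h : (M.submatrix f f).PosSemidef) : M.PosSemidef := by
  classical
  cases nonempty_fintype U
  cases nonempty_fintype W
  let E : Matrix W U 𝕜 := (1 : Matrix W W 𝕜).submatrix id f
  have hE0 : ∀ x ∉ range f, ∀ i, E x i = 0 := fun x hx i =>
    one_apply_ne fun h => hx ⟨i, h.symm⟩
  have hE : M = E * M.submatrix f f * Eᴴ := by
    ext x y
    by_cases hxy : x ∈ range f ∧ y ∈ range f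
    · obtain ⟨⟨i, rfl⟩, j, rfl⟩ := hxy
      simp [E, mul_apply, one_apply, hf.eq_iff]
    · rw [not_imp_comm.1 (hM x y) hxy]
      rcases not_and_or.1 hxy with hx | hy
      · simp [mul_apply, hE0 x hx]
      · simp [mul_apply, hE0 y hy]
  rw [hE]
  exact h.mul_mul_conjTranspose_same E

lemma posSemidef_apply_eq_zero_of_diag_eq_zero {M : Matrix W W 𝕜} (hM : M.PosSemidef) {v : W}
    (hv : M v v = 0) (i : W) : M i v = 0 := by
  have hstar : M v i = star (M i v) := (hM.isHermitian.apply v i).symm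
  have hdet := (hM.submatrix ![i, v]).det_nonneg
  simp only [det_fin_two, submatrix_apply, cons_val_zero, cons_val_one, hv, hstar, mul_zero,
    zero_sub, neg_nonneg] at hdet
  exact CStarRing.mul_star_self_eq_zero_iff _ |>.1 (le_antisymm hdet (mul_star_self_nonneg _))

/-- The Schur complement of the diagonal entry at `v`, kept as a matrix on all of `W`. With
`x / 0 = 0` it is `M` itself when `M v v = 0`. -/
def schurCompl (M : Matrix W W 𝕜) (v : W) : Matrix W W 𝕜 :=
  of fun i j => M i j - M i v * M v j / M v v

lemma schurCompl_apply_pivot {M : Matrix W W 𝕜} (hM : M.PosSemidef) (v i : W) :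
    schurCompl M v i v = 0 := by
  by_cases hv : M v v = 0
  · simp [schurCompl, posSemidef_apply_eq_zero_of_diag_eq_zero hM hv]
  · simp [schurCompl, hv]

lemma posSemidef_schurCompl [Finite W] {M : Matrix W W 𝕜} (hM : M.PosSemidef) (v : W) :
    (schurCompl M v).PosSemidef := by
  classical
  cases nonempty_fintype W
  let C : Matrix W W 𝕜 := 1 - vecMulVec (fun i => M i v / M v v) (Pi.single v 1)
  have hleft : C * M = schurCompl M v := by
    ext i j
    simp [C, sub_mul, vecMulVec_mul, vecMulVec_apply, schurCompl, div_mul_eq_mul_div]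
  have hright : schurCompl M v * Cᴴ = schurCompl M v := by
    ext i j
    simp [C, mul_sub, conjTranspose_vecMulVec, mul_vecMulVec, vecMulVec_apply,
      schurCompl_apply_pivot hM]
  rw [← hright, ← hleft]
  exact hM.mul_mul_conjTranspose_same C

lemma posSemidef_of_schurCompl [Finite W] {M : Matrix W W 𝕜} (hM : M.IsHermitian) {v : W}
    (hv : 0 ≤ M v v) (hS : (schurCompl M v).PosSemidef) : M.PosSemidef := by
  have hcol := (posSemidef_vecMulVec_self_star fun i => M i v).smul (inv_nonneg.2 hv)
  have hM' : M = schurCompl M v +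
      (M v v)⁻¹ • vecMulVec (fun i => M i v) (star fun i => M i v) := by
    ext i j
    simp only [schurCompl, of_apply, Matrix.add_apply, Matrix.smul_apply, vecMulVec_apply,
      Pi.star_apply, smul_eq_mul, hM.apply]
    ring
  rw [hM']
  exact hS.add hcol

end PosSemidef

section Psi

variable {α x y : ℝ}

lemma psiF_of_nonneg (hα : α ≠ 0) (hx : 0 ≤ x) : psiF α x = x ^ α := by
  rcases hx.eq_or_lt with rfl | hx
  · simp [psiF, hα]
  · simp [psiF, Real.sign_of_pos hx, abs_of_pos hx]

lemma psiF_neg (α x : ℝ) : psiF α (-x) = -psiF α x := by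
  simp [psiF, Real.sign_neg]

lemma real_sign_mul (x y : ℝ) : Real.sign (x * y) = Real.sign x * Real.sign y := by
  rcases lt_trichotomy x 0 with hx | rfl | hx <;> rcases lt_trichotomy y 0 with hy | rfl | hy <;>
    simp [*, Real.sign_of_neg, Real.sign_of_pos, mul_pos_of_neg_of_neg, mul_neg_of_neg_of_pos,
      mul_neg_of_pos_of_neg]

/-- `ψ_α` as a homomorphism of monoids with zero, which makes it compatible with products and
quotients, including `x / 0 = 0`. -/
def psiHom (α : ℝ) : ℝ →*₀ ℝ where
  toFun := psiF α
  map_zero' := by simp [psiF]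
  map_one' := by simp [psiF]
  map_mul' x y := by
    rw [psiF, psiF, psiF, real_sign_mul, abs_mul, Real.mul_rpow (abs_nonneg x) (abs_nonneg y),
      mul_mul_mul_comm]

lemma psiF_zero (α : ℝ) : psiF α 0 = 0 := map_zero (psiHom α)

lemma psiF_mul_div (α x y z : ℝ) : psiF α (x * y / z) = psiF α x * psiF α y / psiF α z := by
  change psiHom α (x * y / z) = psiHom α x * psiHom α y / psiHom α z
  rw [map_div₀, map_mul]

lemma psiF_sub_le (hα : 1 ≤ α) (hy : 0 ≤ y) (hyx : y ≤ x) :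
    psiF α (x - y) ≤ psiF α x - psiF α y := by
  have hα0 : α ≠ 0 := by linarith
  rw [psiF_of_nonneg hα0 (sub_nonneg.2 hyx), psiF_of_nonneg hα0 (hy.trans hyx),
    psiF_of_nonneg hα0 hy, le_sub_iff_add_le]
  simpa using Real.add_rpow_le_rpow_add (sub_nonneg.2 hyx) hy hα

lemma psiF_sub_of_eq_zero_or_eq_zero_or_eq (h : x = 0 ∨ y = 0 ∨ x = y) :
    psiF α (x - y) = psiF α x - psiF α y := by
  rcases h with rfl | rfl | rfl <;> simp [psiF_zero, psiF_neg]

lemma psiF_schurCompl_diag_le {W : Type*} [Finite W] (hα : 1 ≤ α) {A : Matrix W W ℝ}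
    (hA : A.PosSemidef) (v i : W) :
    psiF α (schurCompl A v i i) ≤ schurCompl (A.map (psiF α)) v i i := by
  have hdiag : 0 ≤ schurCompl A v i i := (posSemidef_schurCompl hA v).diag_nonneg
  have hsymm : A v i = A i v := hA.isHermitian.apply i v
  simp only [schurCompl, of_apply, map_apply, ← psiF_mul_div, hsymm] at hdiag ⊢
  exact psiF_sub_le hα (div_nonneg (mul_self_nonneg _) hA.diag_nonneg) (sub_nonneg.1 hdiag)

end Psi

section Elimination

variable {U W : Type*} [Fintype U] [Fintype W] {G : SimpleGraph U} {H : SimpleGraph W}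

lemma mem_PsetG_map_psiF_of_posSemidef {A : Matrix W W ℝ} (hA : A ∈ PsetG H univ) {α : ℝ}
    (hpos : (A.map (psiF α)).PosSemidef) : A.map (psiF α) ∈ PsetG H univ :=
  ⟨hpos, fun _ _ => mem_univ _, fun i j hij hadj => by
    rw [map_apply, hA.2.2 i j hij hadj, psiF_zero]⟩

lemma HsetPsi_subset_of_injective {f : U → W} (hf : Function.Injective f) (hGH : G ≤ H.comap f) :
    HsetPsi H ⊆ HsetPsi G := by
  intro α hα A hA
  let B : Matrix W W ℝ :=
    of fun x y => Function.extend (Prod.map f f) (Function.uncurry A) 0 (x, y)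
  have hBA : B.submatrix f f = A := by
    ext i j
    exact (hf.prodMap hf).extend_apply (Function.uncurry A) 0 (i, j)
  have hrange : ∀ x y, B x y ≠ 0 → x ∈ range f ∧ y ∈ range f := by
    intro x y hxy
    have hmem : (x, y) ∈ range (Prod.map f f) :=
      by_contra fun h => hxy (Function.extend_apply' _ (0 : W × W → ℝ) _ h)
    rwa [range_prodMap] at hmem
  have hB : B ∈ PsetG H univ := by
    refine ⟨posSemidef_of_submatrix_of_support_subset hf hrange (hBA ▸ hA.1), fun _ _ => mem_univ _,
      fun x y hxy hadj => by_contra fun hB0 => ?_⟩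
    obtain ⟨⟨i, rfl⟩, j, rfl⟩ := hrange x y hB0
    have hAij : B (f i) (f j) = A i j := congr_fun₂ hBA i j
    exact hB0 <| hAij.trans <| hA.2.2 i j (ne_of_apply_ne f hxy) fun h => hadj (hGH h)
  refine mem_PsetG_map_psiF_of_posSemidef hA ?_
  rw [← hBA, ← submatrix_map]
  exact (hα B hB).1.submatrix f

lemma submatrix_schurCompl_mem_PsetG {f : U → W} {v : W} (hf : Function.Injective f)
    (hv : v ∉ range f) (hHG : H.comap f ≤ G)
    (hclique : G.IsClique (f ⁻¹' H.neighborSet v)) {A : Matrix W W ℝ} (hA : A ∈ PsetG H univ) :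
    (schurCompl A v).submatrix f f ∈ PsetG G univ := by
  refine ⟨(posSemidef_schurCompl hA.1 v).submatrix f, fun _ _ => mem_univ _,
    fun i j hij hadj => ?_⟩
  have hAij : A (f i) (f j) = 0 := hA.2.2 _ _ (hf.ne hij) fun h => hadj (hHG h)
  have hne : ∀ k, v ≠ f k := fun k h => hv ⟨k, h.symm⟩
  have hprod : A (f i) v * A v (f j) = 0 := by
    by_contra h
    refine hadj (hclique ?_ ?_ hij)
    · exact by_contra fun hi =>
        left_ne_zero_of_mul h (hA.2.2 _ _ (hne i).symm fun h => hi h.symm)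
    · exact by_contra fun hj => right_ne_zero_of_mul h (hA.2.2 _ _ (hne j) hj)
  simp [schurCompl, hAij, hprod]

lemma posSemidef_map_psiF_schurCompl {f : U → W} {v : W} (hf : Function.Injective f)
    (hrange : range f = {v}ᶜ) (hHG : H.comap f ≤ G) (hclique : G.IsClique (f ⁻¹' H.neighborSet v))
    {α : ℝ} (hα : α ∈ HsetPsi G) {A : Matrix W W ℝ} (hA : A ∈ PsetG H univ) :
    ((schurCompl A v).map (psiF α)).PosSemidef := by
  have hcol : ∀ i, schurCompl A v i v = 0 := schurCompl_apply_pivot hA.1 v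
  have hrow : ∀ j, schurCompl A v v j = 0 := fun j => by
    rw [← (posSemidef_schurCompl hA.1 v).isHermitian.apply, hcol, star_zero]
  have hsupp : ∀ i j, (schurCompl A v).map (psiF α) i j ≠ 0 → i ∈ range f ∧ j ∈ range f := by
    intro i j hij
    rw [hrange]
    constructor <;> rintro rfl
    · exact hij (by rw [map_apply, hrow, psiF_zero])
    · exact hij (by rw [map_apply, hcol, psiF_zero])
  refine posSemidef_of_submatrix_of_support_subset hf hsupp ?_
  rw [submatrix_map]
  exact (hα _ (submatrix_schurCompl_mem_PsetG hf (by simp [hrange]) hHG hclique hA)).1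

lemma schurCompl_map_psiF_apply_of_ne {v : W} (hindep : H.IsIndepSet (H.neighborSet v))
    {A : Matrix W W ℝ} (hA : A ∈ PsetG H univ) (α : ℝ) {i j : W} (hij : i ≠ j) :
    schurCompl (A.map (psiF α)) v i j = psiF α (schurCompl A v i j) := by
  simp only [schurCompl, of_apply, map_apply, ← psiF_mul_div]
  refine (psiF_sub_of_eq_zero_or_eq_zero_or_eq ?_).symm
  by_cases hvv : A v v = 0
  · simp [hvv]
  by_cases hiv : i = v
  · simp [hiv, hvv]
  by_cases hjv : j = v
  · simp [hjv, hvv]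
  by_cases hi : H.Adj v i
  · by_cases hj : H.Adj v j
    · exact .inl (hA.2.2 i j hij (hindep hi hj hij))
    · simp [hA.2.2 v j (Ne.symm hjv) hj]
  · simp [hA.2.2 i v hiv fun h => hi h.symm]

/-- `G` contains the elimination graph of `H` at `v`, in which `v` is deleted and its neighbours are
joined to each other. -/
lemma HsetPsi_subset_of_eliminate {f : U → W} {v : W} (hf : Function.Injective f)
    (hrange : range f = {v}ᶜ) (hHG : H.comap f ≤ G)
    (hclique : G.IsClique (f ⁻¹' H.neighborSet v)) (hindep : H.IsIndepSet (H.neighborSet v)) :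
    HsetPsi G ∩ Ici 1 ⊆ HsetPsi H := by
  classical
  rintro α ⟨hα, hα1 : 1 ≤ α⟩ A hA
  let gain : W → ℝ := fun i => schurCompl (A.map (psiF α)) v i i - psiF α (schurCompl A v i i)
  have hgain : (diagonal gain).PosSemidef :=
    .diagonal fun i => sub_nonneg.2 (psiF_schurCompl_diag_le hα1 hA.1 v i)
  have hdecomp : schurCompl (A.map (psiF α)) v =
      (schurCompl A v).map (psiF α) + diagonal gain := by
    ext i j
    rcases eq_or_ne i j with rfl | hij
    · simp [gain]
    · simp [schurCompl_map_psiF_apply_of_ne hindep hA α hij, diagonal_apply_ne _ hij]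
  have hpivot : 0 ≤ A.map (psiF α) v v := by
    rw [map_apply, psiF_of_nonneg (by linarith) hA.1.diag_nonneg]
    exact Real.rpow_nonneg hA.1.diag_nonneg α
  have hherm : (A.map (psiF α)).IsHermitian := hA.1.isHermitian.map (psiF α) fun _ => rfl
  refine mem_PsetG_map_psiF_of_posSemidef hA (posSemidef_of_schurCompl hherm hpivot ?_)
  rw [hdecomp]
  exact (posSemidef_map_psiF_schurCompl hf hrange hHG hclique hα hA).add hgain

end Elimination

lemma one_le_of_mem_HsetPsi_pathGraph_three {α : ℝ}
    (hα : α ∈ HsetPsi (SimpleGraph.pathGraph 3)) : 1 ≤ α := by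
  let A : Matrix (Fin 3) (Fin 3) ℝ := !![1, 1, 0; 1, 2, 1; 0, 1, 1]
  have hA : A ∈ PsetG (SimpleGraph.pathGraph 3) univ := by
    refine ⟨?_, fun _ _ => mem_univ _, fun i j hij hadj => ?_⟩
    · let B : Matrix (Fin 2) (Fin 3) ℝ := !![1, 1, 0; 0, 1, 1]
      have hgram : A = Bᴴ * B := by
        ext i j
        fin_cases i <;> fin_cases j <;> norm_num [A, B, mul_apply, Fin.sum_univ_two]
      rw [hgram]
      exact posSemidef_conjTranspose_mul_self B
    · rw [SimpleGraph.pathGraph_adj] at hadj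
      fin_cases i <;> fin_cases j <;> simp [A] at hij hadj ⊢
  have hone : psiF α 1 = 1 := map_one (psiHom α)
  have htwo : psiF α 2 = 2 ^ α := by simp [psiF, Real.sign_of_pos]
  have hform : star ![1, -1, 1] ⬝ᵥ A.map (psiF α) *ᵥ ![1, -1, 1] = 2 ^ α - 2 := by
    simp only [A, mulVec, dotProduct, Fin.sum_univ_three, map_apply, of_apply, cons_val, psiF_zero,
      hone, htwo, Pi.star_apply, star_trivial]
    ring
  have hquad := (hα A hA).1.dotProduct_mulVec_nonneg ![1, -1, 1]
  have hpow : (2 : ℝ) ^ (1 : ℝ) ≤ 2 ^ α := by linarith [Real.rpow_one (2 : ℝ)]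
  exact (Real.rpow_le_rpow_left_iff one_lt_two).1 hpow

/-- `Relator.RightUnique G.Adj` says that each vertex has at most one neighbour, that is, `G` is a
disjoint union of copies of `K_1` and `K_2`. -/
lemma one_le_of_mem_HsetPsi {V : Type*} [Fintype V] {G : SimpleGraph V}
    (hG : ¬ Relator.RightUnique G.Adj) {α : ℝ} (hα : α ∈ HsetPsi G) : 1 ≤ α := by
  simp only [Relator.RightUnique, not_forall] at hG
  obtain ⟨x, y, z, hxy, hxz, hyz⟩ := hG
  have hinj : Function.Injective ![y, x, z] := by
    intro i j
    fin_cases i <;> fin_cases j <;> simp [hxy.ne, hxy.ne', hxz.ne, hxz.ne', hyz, Ne.symm hyz]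
  refine one_le_of_mem_HsetPsi_pathGraph_three (HsetPsi_subset_of_injective hinj ?_ hα)
  intro i j hij
  rw [SimpleGraph.pathGraph_adj] at hij
  fin_cases i <;> fin_cases j <;> simp_all [SimpleGraph.adj_comm]

section AddPath

variable {V : Type*} {G : SimpleGraph V} {v₁ v₂ : V} {t : ℕ}

lemma addPath_adj_inl_inl {a b : V} :
    (addPath G v₁ v₂ t).Adj (.inl a) (.inl b) ↔
      G.Adj a b ∨ t = 0 ∧ a ≠ b ∧ s(a, b) = s(v₁, v₂) := by
  grind [addPath, SimpleGraph.fromRel_adj, SimpleGraph.Adj.ne, SimpleGraph.Adj.symm]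

lemma addPath_adj_inl_inr {a : V} {i : Fin t} :
    (addPath G v₁ v₂ t).Adj (.inl a) (.inr i) ↔
      a = v₁ ∧ (i : ℕ) = 0 ∨ a = v₂ ∧ (i : ℕ) + 1 = t := by
  grind [addPath, SimpleGraph.fromRel_adj]

lemma addPath_adj_inr_inr {i j : Fin t} :
    (addPath G v₁ v₂ t).Adj (.inr i) (.inr j) ↔ (j : ℕ) = i + 1 ∨ (i : ℕ) = j + 1 := by
  grind [addPath, SimpleGraph.fromRel_adj]

lemma not_rightUnique_addPath_of (hG : ¬ Relator.RightUnique G.Adj) :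
    ¬ Relator.RightUnique (addPath G v₁ v₂ t).Adj := fun h =>
  hG fun _ _ _ hxy hxz => Sum.inl_injective <|
    h (addPath_adj_inl_inl.2 (.inl hxy)) (addPath_adj_inl_inl.2 (.inl hxz))

lemma not_rightUnique_addPath (hv : v₁ ≠ v₂) (ht : t ≠ 0) :
    ¬ Relator.RightUnique (addPath G v₁ v₂ t).Adj := by
  intro h
  let first : Fin t := ⟨0, Nat.pos_of_ne_zero ht⟩
  have hv₁ : (addPath G v₁ v₂ t).Adj (.inr first) (.inl v₁) :=
    (addPath_adj_inl_inr.2 (.inl ⟨rfl, rfl⟩)).symm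
  obtain rfl | ht1 := eq_or_ne t 1
  · have hv₂ : (addPath G v₁ v₂ 1).Adj (.inr first) (.inl v₂) :=
      (addPath_adj_inl_inr.2 (.inr ⟨rfl, rfl⟩)).symm
    exact hv (Sum.inl_injective (h hv₁ hv₂))
  · have hsecond : (addPath G v₁ v₂ t).Adj (.inr first) (.inr ⟨1, by omega⟩) :=
      addPath_adj_inr_inr.2 (.inl rfl)
    exact Sum.inl_ne_inr (h hv₁ hsecond)

lemma range_sumMap_id_castSucc :
    range (Sum.map id Fin.castSucc : V ⊕ Fin t → V ⊕ Fin (t + 1)) = {.inr (Fin.last t)}ᶜ := by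
  ext (a | i)
  · simp
  · simp [Fin.exists_castSucc_eq]

lemma comap_addPath_succ_le :
    (addPath G v₁ v₂ (t + 1)).comap (Sum.map id Fin.castSucc) ≤ addPath G v₁ v₂ t := by
  rintro (a | i) (b | j) <;>
    simp only [SimpleGraph.comap_adj, Sum.map_inl, Sum.map_inr, id_eq, Fin.val_castSucc,
      addPath_adj_inl_inl, addPath_adj_inl_inr, addPath_adj_inr_inr,
      SimpleGraph.adj_comm _ (Sum.inr _) (Sum.inl _)] <;>
    grind

lemma isClique_preimage_neighborSet_last :
    (addPath G v₁ v₂ t).IsClique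
      (Sum.map id Fin.castSucc ⁻¹' (addPath G v₁ v₂ (t + 1)).neighborSet (.inr (Fin.last t))) := by
  rintro (a | i) hx (b | j) hy hxy <;>
    simp only [mem_preimage, SimpleGraph.mem_neighborSet, Sum.map_inl, Sum.map_inr, id_eq,
      Fin.val_castSucc, Fin.val_last, addPath_adj_inl_inl, addPath_adj_inl_inr, addPath_adj_inr_inr,
      SimpleGraph.adj_comm _ (Sum.inr _) (Sum.inl _)] at hx hy ⊢ <;>
    grind

lemma isIndepSet_neighborSet_last (hv : v₁ ≠ v₂) (hadj : t = 0 → ¬ G.Adj v₁ v₂) :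
    (addPath G v₁ v₂ (t + 1)).IsIndepSet
      ((addPath G v₁ v₂ (t + 1)).neighborSet (.inr (Fin.last t))) := by
  rintro (a | i) hx (b | j) hy hxy <;>
    simp only [SimpleGraph.mem_neighborSet, Fin.val_last, addPath_adj_inl_inl, addPath_adj_inl_inr,
      addPath_adj_inr_inr, SimpleGraph.adj_comm _ (Sum.inr _) (Sum.inl _)] at hx hy ⊢ <;>
    grind [SimpleGraph.Adj.symm]

variable [Fintype V]

lemma HsetPsi_addPath_subset (t : ℕ) : HsetPsi (addPath G v₁ v₂ t) ⊆ HsetPsi G :=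
  HsetPsi_subset_of_injective Sum.inl_injective fun _ _ h => addPath_adj_inl_inl.2 (.inl h)

lemma HsetPsi_addPath_subset_succ (hv : v₁ ≠ v₂) (hadj : t = 0 → ¬ G.Adj v₁ v₂)
    (hpath : ¬ Relator.RightUnique (addPath G v₁ v₂ t).Adj) :
    HsetPsi (addPath G v₁ v₂ t) ⊆ HsetPsi (addPath G v₁ v₂ (t + 1)) := fun _ hα =>
  HsetPsi_subset_of_eliminate (Function.injective_id.sumMap (Fin.castSucc_injective t))
    range_sumMap_id_castSucc comap_addPath_succ_le isClique_preimage_neighborSet_last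
    (isIndepSet_neighborSet_last hv hadj) ⟨hα, one_le_of_mem_HsetPsi hpath hα⟩

end AddPath

theorem Hset_path_addition_general {V : Type*} [Fintype V] (G : SimpleGraph V) {v₁ v₂ : V}
    (hv : v₁ ≠ v₂) :
    (∀ m : ℕ, 2 ≤ m →
      HsetPsi (addPath G v₁ v₂ (m - 1)) ⊆ HsetPsi (addPath G v₁ v₂ m)) ∧
    (∀ t : ℕ, HsetPsi (addPath G v₁ v₂ t) ⊆ HsetPsi G) ∧
    (¬ G.Adj v₁ v₂ → ¬ Relator.RightUnique (addPath G v₁ v₂ 0).Adj →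
      HsetPsi (addPath G v₁ v₂ 0) ⊆ HsetPsi (addPath G v₁ v₂ 1)) := by
  refine ⟨fun m hm => ?_, HsetPsi_addPath_subset, fun hadj hpath =>
    HsetPsi_addPath_subset_succ hv (fun _ => hadj) hpath⟩
  obtain ⟨t, rfl⟩ := Nat.exists_eq_add_of_le' (one_le_two.trans hm)
  have ht : t ≠ 0 := by omega
  exact HsetPsi_addPath_subset_succ hv (absurd · ht) (not_rightUnique_addPath hv ht)

/-- **Corollary 4.8**: for `G` not a disjoint union of copies of `K_2` and vertices
`v₁ ≠ v₂`, one has `H^ψ_{G_2(v₁,v₂)} ⊆ H^ψ_{G_3(v₁,v₂)} ⊆ ⋯ ⊆ H^ψ_G`, and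
`H^ψ_{G_1(v₁,v₂)} ⊆ H^ψ_{G_2(v₁,v₂)}` when `v₁, v₂` are not adjacent. -/
theorem Hset_path_addition {V : Type*} [Fintype V] [DecidableEq V] (G : SimpleGraph V)
    (hG : ¬ ∀ ⦃x y z : V⦄, G.Adj x y → G.Adj x z → y = z)
    (v₁ v₂ : V) (hv : v₁ ≠ v₂) :
    (∀ m : ℕ, 2 ≤ m →
      HsetPsi (addPath G v₁ v₂ (m - 1)) ⊆ HsetPsi (addPath G v₁ v₂ m)) ∧
    (∀ m : ℕ, 2 ≤ m → HsetPsi (addPath G v₁ v₂ (m - 1)) ⊆ HsetPsi G) ∧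
    (¬ G.Adj v₁ v₂ →
      HsetPsi (addPath G v₁ v₂ 0) ⊆ HsetPsi (addPath G v₁ v₂ 1)) := by
  obtain ⟨hsucc, hbase, hzero⟩ := Hset_path_addition_general G hv
  exact ⟨hsucc, fun m _ => hbase (m - 1), fun hadj => hzero hadj (not_rightUnique_addPath_of hG)⟩
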